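/- Multi-task generalization bound: Under the constraints ‖A‖_{2,1}² ≤ T/γ and ‖a_0‖₂² ≤ 1/β with U orthogonal, if the loss l is c-admissible and bounded by B, m_1 = ... = m_T = m, and ‖x_t‖₂ ≤ r for all samples, then for any δ > 0, with probability at least 1 − δ over the i.i.d. draw of the samples, (1/T)∑_{t=1}^T E_x l(y_t, ⟨a_t + a_0, Uᵀ x_t⟩) − (1/T)∑_{t=1}^T (1/m)∑_{i=1}^m l(y_{ti}, ⟨a_t + a_0, Uᵀ x_{ti}⟩) ≤ 2cr/√(γm) + 2cr/√(βmT) + 3B√(ln(2/δ)/(2mT)), uniformly over all (A, a_0, U) satisfying the constraints. -/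

import Mathlib

open Matrix MeasureTheory

/-- The L2,1-norm of a matrix: the sum of the Euclidean norms of its rows. -/
noncomputable def l21 {d T : ℕ} (A : Matrix (Fin d) (Fin T) ℝ) : ℝ :=
  ∑ i, Real.sqrt (∑ t, A i t ^ 2)

/-!
The supremum over the parameters of the deviation between expected and empirical losses changes by
at most `B` when one of the `T * m` sample points does, so by McDiarmid's inequality it exceeds its
mean by more than `B * √(T * m * log (1 / δ) / 2)` with probability at most `δ`. Its mean is at most
twice the expected Rademacher average of the losses, by symmetrization with an independent copy of
the sample. The contraction principle removes the loss at the price of a factor `c`, and the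
Rademacher average of a ball of linear functionals is bounded through
`𝔼 ‖∑ i, σ i • x i‖ ^ 2 = ∑ i, ‖x i‖ ^ 2`; the task weights contribute a ball of radius `√(T / γ)`
in the Hilbert sum of `T` copies of the feature space, the shared weight one of radius `√(1 / β)`.
An orthogonal change of features only rotates the weights, and the squared `L2,1`-norm of `A`
dominates its squared Frobenius norm.
-/

open ProbabilityTheory
open scoped BigOperators NNReal

section Expect

variable {κ Ω : Type*} [MeasurableSpace Ω] {P : Measure Ω} {s : Finset κ} {F : κ → Ω → ℝ}

theorem integrable_expect (hF : ∀ k ∈ s, Integrable (F k) P) :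
    Integrable (fun ω => 𝔼 k ∈ s, F k ω) P := by
  simpa only [Finset.expect_eq_sum_div_card] using (integrable_finsetSum s hF).div_const _

theorem integral_expect (hF : ∀ k ∈ s, Integrable (F k) P) :
    ∫ ω, 𝔼 k ∈ s, F k ω ∂P = 𝔼 k ∈ s, ∫ ω, F k ω ∂P := by
  simp only [Finset.expect_eq_sum_div_card, integral_div, integral_finsetSum s hF]

end Expect

section BoundedSup

variable {Θ : Type*} {f : Θ → ℝ} {C : ℝ}

theorem bddAbove_range_of_forall_abs_le (hf : ∀ θ, |f θ| ≤ C) : BddAbove (Set.range f) :=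
  ⟨C, Set.forall_mem_range.2 fun θ => le_of_abs_le (hf θ)⟩

theorem abs_ciSup_le_of_forall_abs_le [Nonempty Θ] (hf : ∀ θ, |f θ| ≤ C) : |⨆ θ, f θ| ≤ C :=
  abs_le.2 ⟨(neg_le_of_abs_le (hf _)).trans
    (le_ciSup (bddAbove_range_of_forall_abs_le hf) (Classical.arbitrary Θ)),
    ciSup_le fun θ => le_of_abs_le (hf θ)⟩

theorem abs_ciSup_sub_ciSup_le [Nonempty Θ] {g : Θ → ℝ} (hf : BddAbove (Set.range f))
    (hg : BddAbove (Set.range g)) (h : ∀ θ, |f θ - g θ| ≤ C) : |(⨆ θ, f θ) - ⨆ θ, g θ| ≤ C := by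
  rw [abs_sub_le_iff, sub_le_iff_le_add', sub_le_iff_le_add']
  constructor <;> refine ciSup_le fun θ => ?_
  · linarith [(abs_sub_le_iff.1 (h θ)).1, le_ciSup hg θ]
  · linarith [(abs_sub_le_iff.1 (h θ)).2, le_ciSup hf θ]

theorem integrable_ciSup_of_forall_abs_le [Nonempty Θ] [Countable Θ] {Ω : Type*}
    [MeasurableSpace Ω] {F : Θ → Ω → ℝ} (hFm : ∀ θ, Measurable (F θ))
    (hF : ∀ θ ω, |F θ ω| ≤ C) (P : Measure Ω) [IsFiniteMeasure P] :
    Integrable (fun ω => ⨆ θ, F θ ω) P :=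
  Integrable.of_bound (Measurable.iSup hFm).aestronglyMeasurable C
    (ae_of_all _ fun ω => abs_ciSup_le_of_forall_abs_le fun θ => hF θ ω)

theorem ciSup_integral_le_integral_ciSup [Nonempty Θ] [Countable Θ] {Ω : Type*}
    [MeasurableSpace Ω] {F : Θ → Ω → ℝ} (hFm : ∀ θ, Measurable (F θ))
    (hF : ∀ θ ω, |F θ ω| ≤ C) (P : Measure Ω) [IsFiniteMeasure P] :
    ⨆ θ, ∫ ω, F θ ω ∂P ≤ ∫ ω, ⨆ θ, F θ ω ∂P :=
  ciSup_le fun θ => integral_mono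
    (Integrable.of_bound (hFm θ).aestronglyMeasurable C (ae_of_all _ (hF θ)))
    (integrable_ciSup_of_forall_abs_le hFm hF P)
    fun ω => le_ciSup (bddAbove_range_of_forall_abs_le fun θ => hF θ ω) θ

end BoundedSup

section Rademacher

variable {Θ ι : Type*}

/-- The permutation of the sign vectors that flips the sign at `i`. -/
def flipSign [DecidableEq ι] (i : ι) : (ι → ℤˣ) ≃ (ι → ℤˣ) := Equiv.mulRight (Pi.mulSingle i (-1))

theorem flipSign_apply_self [DecidableEq ι] (i : ι) (σ : ι → ℤˣ) : flipSign i σ i = -σ i := by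
  simp [flipSign]

theorem flipSign_apply_of_ne [DecidableEq ι] {i j : ι} (h : j ≠ i) (σ : ι → ℤˣ) :
    flipSign i σ j = σ j := by
  simp [flipSign, h]

variable [Fintype ι]

/-- The empirical Rademacher average `𝔼_σ sup_θ ∑ i, σ i * v θ i` of a family of vectors, with `σ`
uniform on the sign vectors, encoded as functions into `ℤˣ`. It is not normalised by `card ι`. -/
noncomputable def rademacherAverage [DecidableEq ι] (v : Θ → ι → ℝ) : ℝ :=
  𝔼 σ : ι → ℤˣ, ⨆ θ, ∑ i, σ i • v θ i

theorem abs_int_units_smul (s : ℤˣ) (x : ℝ) : |s • x| = |x| := by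
  rcases Int.units_eq_one_or s with rfl | rfl <;> simp [Units.smul_def]

theorem inner_sum_int_units_smul {E : Type*} [NormedAddCommGroup E] [InnerProductSpace ℝ E]
    (a : E) (σ : ι → ℤˣ) (x : ι → E) :
    inner ℝ a (∑ i, σ i • x i) = ∑ i, σ i • inner ℝ a (x i) := by
  simp only [← innerₗ_apply_apply, map_sum, Units.smul_def, map_zsmul]

theorem abs_sum_int_units_smul_le {v C : ι → ℝ} (hv : ∀ i, |v i| ≤ C i) (σ : ι → ℤˣ) :
    |∑ i, σ i • v i| ≤ ∑ i, C i :=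
  (Finset.abs_sum_le_sum_abs _ _).trans <|
    Finset.sum_le_sum fun i _ => (abs_int_units_smul _ _).trans_le (hv i)

theorem bddAbove_range_sum_smul {v : Θ → ι → ℝ} {C : ι → ℝ} (hv : ∀ θ i, |v θ i| ≤ C i)
    (σ : ι → ℤˣ) : BddAbove (Set.range fun θ => ∑ i, σ i • v θ i) :=
  bddAbove_range_of_forall_abs_le fun θ => abs_sum_int_units_smul_le (hv θ) σ

variable [DecidableEq ι]

theorem integrable_rademacherAverage [Nonempty Θ] [Countable Θ] {Ω : Type*} [MeasurableSpace Ω]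
    {g : Θ → ι → Ω → ℝ} {C : ι → ℝ} (hgm : ∀ θ i, Measurable (g θ i))
    (hg : ∀ θ i ω, |g θ i ω| ≤ C i) (P : Measure Ω) [IsFiniteMeasure P] :
    Integrable (fun ω => rademacherAverage fun θ i => g θ i ω) P := by
  refine integrable_expect fun σ _ => integrable_ciSup_of_forall_abs_le
    (fun θ => Finset.measurable_fun_sum _ fun i _ => ?_)
    (fun θ ω => abs_sum_int_units_smul_le (hg θ · ω) σ) P
  simpa only [Units.smul_def, zsmul_eq_mul] using (hgm θ i).const_mul _

theorem two_mul_expect_eq_expect_add_flipSign (i : ι) (f : (ι → ℤˣ) → ℝ) :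
    2 * 𝔼 σ, f σ = 𝔼 σ, (f σ + f (flipSign i σ)) := by
  rw [Finset.expect_add_distrib, two_mul]
  congr 1
  exact (Fintype.expect_equiv (flipSign i) _ _ fun _ => rfl).symm

theorem rademacherAverage_neg (v : Θ → ι → ℝ) :
    rademacherAverage (fun θ i => -v θ i) = rademacherAverage v :=
  Fintype.expect_equiv (Equiv.neg _) _ _ fun σ => by simp

theorem rademacherAverage_const_mul {c : ℝ} (hc : 0 ≤ c) (v : Θ → ι → ℝ) :
    rademacherAverage (fun θ i => c * v θ i) = c * rademacherAverage v := by
  simp only [rademacherAverage, Finset.mul_expect, Real.mul_iSup_of_nonneg hc, Finset.mul_sum,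
    mul_smul_comm]

theorem rademacherAverage_comp_right_le {Θ' : Type*} [Nonempty Θ'] {v : Θ → ι → ℝ} {C : ι → ℝ}
    (hv : ∀ θ i, |v θ i| ≤ C i) (q : Θ' → Θ) :
    rademacherAverage (fun θ' => v (q θ')) ≤ rademacherAverage v :=
  Finset.expect_le_expect fun σ _ => ciSup_le fun θ' =>
    le_ciSup (bddAbove_range_sum_smul hv σ) (q θ')

section Nonempty

variable [Nonempty Θ] {v w : Θ → ι → ℝ} {C D : ι → ℝ}

theorem rademacherAverage_add_le (hv : ∀ θ i, |v θ i| ≤ C i) (hw : ∀ θ i, |w θ i| ≤ D i) :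
    rademacherAverage (fun θ i => v θ i + w θ i) ≤ rademacherAverage v + rademacherAverage w := by
  rw [rademacherAverage, rademacherAverage, rademacherAverage, ← Finset.expect_add_distrib]
  refine Finset.expect_le_expect fun σ _ => ciSup_le fun θ => ?_
  simp only [smul_add, Finset.sum_add_distrib]
  exact add_le_add (le_ciSup (bddAbove_range_sum_smul hv σ) θ)
    (le_ciSup (bddAbove_range_sum_smul hw σ) θ)

theorem rademacherAverage_sub_le (hv : ∀ θ i, |v θ i| ≤ C i) (hw : ∀ θ i, |w θ i| ≤ D i) :
    rademacherAverage (fun θ i => v θ i - w θ i) ≤ rademacherAverage v + rademacherAverage w := by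
  rw [← rademacherAverage_neg w]
  exact rademacherAverage_add_le (w := fun θ i => -w θ i) hv fun θ i =>
    (abs_neg (w θ i)).trans_le (hw θ i)

theorem ciSup_add_add_ciSup_sub_le (F : Θ → ℝ) {h g : Θ → ℝ}
    (hplus : BddAbove (Set.range fun θ => F θ + g θ))
    (hminus : BddAbove (Set.range fun θ => F θ - g θ))
    (hg : ∀ θ θ', |h θ - h θ'| ≤ |g θ - g θ'|) :
    (⨆ θ, (F θ + h θ)) + ⨆ θ, (F θ - h θ) ≤ (⨆ θ, (F θ + g θ)) + ⨆ θ, (F θ - g θ) := by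
  refine ciSup_add_ciSup_le fun p q => ?_
  have hpq := (le_abs_self _).trans (hg p q)
  rcases abs_cases (g p - g q) with h | h
  · linarith [le_ciSup hplus p, le_ciSup hminus q]
  · linarith [le_ciSup hplus q, le_ciSup hminus p]

/-- Pairing each sign vector with its flip at `i` isolates the coordinate that changes. -/
theorem rademacherAverage_le_of_forall_ne_eq (i : ι) (hw : ∀ θ j, |w θ j| ≤ D j)
    (hne : ∀ θ, ∀ j ≠ i, v θ j = w θ j)
    (hi : ∀ θ θ', |v θ i - v θ' i| ≤ |w θ i - w θ' i|) :
    rademacherAverage v ≤ rademacherAverage w := by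
  set F : (ι → ℤˣ) → Θ → ℝ := fun σ θ => ∑ j ∈ Finset.univ.erase i, σ j • w θ j
  have sum_eq {u : Θ → ι → ℝ} (hu : ∀ θ, ∀ j ≠ i, u θ j = w θ j) (σ : ι → ℤˣ) (θ : Θ) :
      ∑ j, σ j • u θ j = F σ θ + σ i • u θ i := by
    rw [← Finset.sum_erase_add _ _ (Finset.mem_univ i)]
    congr 1
    exact Finset.sum_congr rfl fun j hj => by rw [hu θ j (Finset.ne_of_mem_erase hj)]
  have sum_flipSign_eq {u : Θ → ι → ℝ} (hu : ∀ θ, ∀ j ≠ i, u θ j = w θ j) (σ : ι → ℤˣ)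
      (θ : Θ) : ∑ j, flipSign i σ j • u θ j = F σ θ - σ i • u θ i := by
    rw [sum_eq hu, sub_eq_add_neg, flipSign_apply_self, Units.neg_smul]
    congr 1
    exact Finset.sum_congr rfl fun j hj => by rw [flipSign_apply_of_ne (Finset.ne_of_mem_erase hj)]
  refine le_of_mul_le_mul_left ?_ two_pos
  simp only [rademacherAverage, two_mul_expect_eq_expect_add_flipSign i]
  refine Finset.expect_le_expect fun σ _ => ?_
  have hplus := bddAbove_range_sum_smul hw σ
  have hminus := bddAbove_range_sum_smul hw (flipSign i σ)
  simp only [sum_flipSign_eq fun _ _ _ => rfl] at hminus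
  simp only [sum_eq fun _ _ _ => rfl] at hplus
  simp only [sum_flipSign_eq hne, sum_flipSign_eq fun _ _ _ => rfl]
  simp only [sum_eq hne, sum_eq fun _ _ _ => rfl]
  refine ciSup_add_add_ciSup_sub_le (F σ) hplus hminus fun θ θ' => ?_
  simpa only [← smul_sub, abs_int_units_smul] using hi θ θ'

/-- The coordinates are contracted one at a time. -/
theorem rademacherAverage_le_of_abs_sub_le (hv : ∀ θ i, |v θ i| ≤ C i) (hw : ∀ θ i, |w θ i| ≤ D i)
    (hvw : ∀ θ θ' i, |v θ i - v θ' i| ≤ |w θ i - w θ' i|) :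
    rademacherAverage v ≤ rademacherAverage w := by
  suffices h : ∀ s : Finset ι,
      rademacherAverage (fun θ => s.piecewise (v θ) (w θ)) ≤ rademacherAverage w by
    simpa using h Finset.univ
  intro s
  induction s using Finset.induction_on with
  | empty => simp
  | insert i s hi ih =>
    refine le_trans (rademacherAverage_le_of_forall_ne_eq i (D := fun j => max (C j) (D j))
      (fun θ j => ?_) (fun θ j hj => ?_) fun θ θ' => ?_) ih
    · by_cases hj : j ∈ s
      · simpa [hj] using Or.inl (hv θ j)
      · simpa [hj] using Or.inr (hw θ j)
    · simp [hj]
    · simpa [hi] using hvw θ θ' i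

theorem rademacherAverage_comp_le {c : ℝ≥0} {φ : ι → ℝ → ℝ} (hφ : ∀ i, LipschitzWith c (φ i))
    (hφw : ∀ θ i, |φ i (w θ i)| ≤ C i) (hw : ∀ θ i, |w θ i| ≤ D i) :
    rademacherAverage (fun θ i => φ i (w θ i)) ≤ c * rademacherAverage w := by
  rw [← rademacherAverage_const_mul c.coe_nonneg]
  refine rademacherAverage_le_of_abs_sub_le (D := fun i => c * D i) hφw (fun θ i => ?_)
    fun θ θ' i => ?_
  · rw [abs_mul, NNReal.abs_eq]
    exact mul_le_mul_of_nonneg_left (hw θ i) c.2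
  · rw [← mul_sub, abs_mul, NNReal.abs_eq]
    exact (hφ i).dist_le_mul _ _

end Nonempty

section InnerProductSpace

variable {E : Type*} [NormedAddCommGroup E] [InnerProductSpace ℝ E]

theorem expect_norm_sum_smul_sq (s : Finset ι) (x : ι → E) :
    𝔼 σ : ι → ℤˣ, ‖∑ i ∈ s, σ i • x i‖ ^ 2 = ∑ i ∈ s, ‖x i‖ ^ 2 := by
  induction s using Finset.induction_on with
  | empty => simp
  | insert i s hi ih =>
    have flip_sum (σ : ι → ℤˣ) : ∑ j ∈ s, flipSign i σ j • x j = ∑ j ∈ s, σ j • x j :=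
      Finset.sum_congr rfl fun j hj => by rw [flipSign_apply_of_ne (ne_of_mem_of_not_mem hj hi)]
    have norm_smul_eq (σ : ι → ℤˣ) : ‖σ i • x i‖ = ‖x i‖ := by
      rcases Int.units_eq_one_or (σ i) with h | h <;> simp [h]
    have parallelogram (σ : ι → ℤˣ) : ‖σ i • x i + ∑ j ∈ s, σ j • x j‖ ^ 2 +
        ‖-(σ i • x i) + ∑ j ∈ s, σ j • x j‖ ^ 2 =
        2 * (‖x i‖ ^ 2 + ‖∑ j ∈ s, σ j • x j‖ ^ 2) := by
      have := parallelogram_law_with_norm ℝ (∑ j ∈ s, σ j • x j) (σ i • x i)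
      rw [norm_smul_eq] at this
      rw [add_comm, neg_add_eq_sub, add_comm (σ i • x i)]
      linarith
    refine mul_left_cancel₀ two_ne_zero ?_
    simp only [two_mul_expect_eq_expect_add_flipSign i, Finset.sum_insert hi, flip_sum,
      flipSign_apply_self, Units.neg_smul, parallelogram]
    rw [← Finset.mul_expect, Finset.expect_add_distrib, ih,
      Finset.expect_const Finset.univ_nonempty]

theorem expect_norm_sum_smul_le (x : ι → E) :
    𝔼 σ : ι → ℤˣ, ‖∑ i, σ i • x i‖ ≤ √(∑ i, ‖x i‖ ^ 2) := by
  refine Real.le_sqrt_of_sq_le ?_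
  have cauchySchwarz := Finset.expect_mul_sq_le_sq_mul_sq Finset.univ
    (fun σ : ι → ℤˣ => ‖∑ i, σ i • x i‖) 1
  simpa [expect_norm_sum_smul_sq, Finset.expect_const] using cauchySchwarz

theorem rademacherAverage_inner_le [Nonempty Θ] {a : Θ → E} {R : ℝ} (ha : ∀ θ, ‖a θ‖ ≤ R)
    (x : ι → E) : rademacherAverage (fun θ i => inner ℝ (a θ) (x i)) ≤ R * √(∑ i, ‖x i‖ ^ 2) := by
  have hR : 0 ≤ R := (norm_nonneg _).trans (ha (Classical.arbitrary Θ))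
  calc rademacherAverage (fun θ i => inner ℝ (a θ) (x i))
      ≤ 𝔼 σ : ι → ℤˣ, R * ‖∑ i, σ i • x i‖ := by
        refine Finset.expect_le_expect fun σ _ => ciSup_le fun θ => ?_
        rw [← inner_sum_int_units_smul]
        exact (real_inner_le_norm _ _).trans (by gcongr; exact ha θ)
    _ = R * 𝔼 σ : ι → ℤˣ, ‖∑ i, σ i • x i‖ := (Finset.mul_expect ..).symm
    _ ≤ R * √(∑ i, ‖x i‖ ^ 2) := by gcongr; exact expect_norm_sum_smul_le x

end InnerProductSpace

end Rademacher

section Symmetrization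

variable {Θ ι Z : Type*} [Fintype ι] [MeasurableSpace Z] (ν : ι → Measure Z)

/-- The sum of the expectations of `f i` under `ν i`, minus its empirical counterpart on the
sample `ω`. -/
noncomputable def deviation (f : ι → Z → ℝ) (ω : ι → Z) : ℝ :=
  ∑ i, (∫ z, f i z ∂ν i - f i (ω i))

theorem measurable_deviation {f : ι → Z → ℝ} (hf : ∀ i, Measurable (f i)) :
    Measurable (deviation ν f) := by
  unfold deviation
  fun_prop

theorem deviation_update_sub [DecidableEq ι] (f : ι → Z → ℝ) (ω : ι → Z) (i : ι) (z : Z) :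
    deviation ν f (Function.update ω i z) - deviation ν f ω = f i (ω i) - f i z := by
  rw [deviation, deviation, ← Finset.sum_sub_distrib, Finset.sum_eq_single i]
  · simp
  · intro j _ hj
    simp [hj]
  · simp

variable [∀ i, IsProbabilityMeasure (ν i)]

theorem abs_deviation_le {f : ι → Z → ℝ} {C : ι → ℝ} (hf : ∀ i z, |f i z| ≤ C i) (ω : ι → Z) :
    |deviation ν f ω| ≤ ∑ i, (C i + C i) := by
  refine (Finset.abs_sum_le_sum_abs _ _).trans <| Finset.sum_le_sum fun i _ =>
    (abs_sub _ _).trans (add_le_add ?_ (hf i _))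
  simpa using norm_integral_le_of_norm_le_const (f := f i) (ae_of_all (ν i) (hf i))

theorem deviation_eq_integral {f : ι → Z → ℝ} (hf : ∀ i, Integrable (f i) (ν i)) (ω : ι → Z) :
    deviation ν f ω = ∫ ω', ∑ i, (f i (ω' i) - f i (ω i)) ∂Measure.pi ν := by
  have hfi (i : ι) : Integrable (fun ω' : ι → Z => f i (ω' i)) (Measure.pi ν) :=
    integrable_comp_eval (hf i)
  have integral_eq (i : ι) :
      ∫ ω', (f i (ω' i) - f i (ω i)) ∂Measure.pi ν = ∫ z, f i z ∂ν i - f i (ω i) := by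
    rw [integral_sub (hfi i) (integrable_const _), integral_comp_eval (hf i).aestronglyMeasurable]
    simp
  rw [integral_finsetSum _ fun i _ => by exact (hfi i).sub (integrable_const _)]
  exact Finset.sum_congr rfl fun i _ => (integral_eq i).symm

theorem measurePreserving_piecewise_swap [DecidableEq ι] (s : Finset ι) :
    MeasurePreserving
      (fun p : (ι → Z) × (ι → Z) => (s.piecewise p.2 p.1, s.piecewise p.1 p.2))
      ((Measure.pi ν).prod (Measure.pi ν)) ((Measure.pi ν).prod (Measure.pi ν)) := by
  have pairing := measurePreserving_arrowProdEquivProdArrow Z Z ι ν ν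
  have swap (i : ι) : MeasurePreserving (if i ∈ s then Prod.swap else id)
      ((ν i).prod (ν i)) ((ν i).prod (ν i)) := by
    split_ifs
    exacts [Measure.measurePreserving_swap, .id _]
  convert! pairing.comp ((measurePreserving_pi _ _ swap).comp (pairing.symm _)) with p
  all_goals
    ext i
    by_cases hi : i ∈ s <;>
      simp [hi, MeasurableEquiv.arrowProdEquivProdArrow, Equiv.arrowProdEquivProdArrow]

variable {f : Θ → ι → Z → ℝ} {C : ι → ℝ} [Countable Θ]

theorem integral_iSup_sum_sub_eq_integral_iSup_sum_smul_sub
    (hfm : ∀ θ i, Measurable (f θ i)) (σ : ι → ℤˣ) :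
    ∫ p, ⨆ θ, ∑ i, (f θ i (p.2 i) - f θ i (p.1 i)) ∂(Measure.pi ν).prod (Measure.pi ν) =
      ∫ p, ⨆ θ, ∑ i, σ i • (f θ i (p.2 i) - f θ i (p.1 i))
        ∂(Measure.pi ν).prod (Measure.pi ν) := by
  classical
  have swap := measurePreserving_piecewise_swap ν {i | σ i = -1}
  have swapped (θ : Θ) (i : ι) (p : (ι → Z) × (ι → Z)) :
      f θ i (Finset.piecewise {i | σ i = -1} p.1 p.2 i) -
        f θ i (Finset.piecewise {i | σ i = -1} p.2 p.1 i) =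
      σ i • (f θ i (p.2 i) - f θ i (p.1 i)) := by
    rcases Int.units_eq_one_or (σ i) with h | h <;> simp [h]
  conv_lhs => rw [← swap.map_eq]
  rw [integral_map swap.measurable.aemeasurable
    (Measurable.iSup fun θ => by fun_prop).aestronglyMeasurable]
  simp only [swapped]

variable [Nonempty Θ]

theorem integral_iSup_sum_sub_eq_integral_rademacherAverage [DecidableEq ι]
    (hfm : ∀ θ i, Measurable (f θ i)) (hf : ∀ θ i z, |f θ i z| ≤ C i) :
    ∫ p, ⨆ θ, ∑ i, (f θ i (p.2 i) - f θ i (p.1 i)) ∂(Measure.pi ν).prod (Measure.pi ν) =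
      ∫ p, rademacherAverage (fun θ i => f θ i (p.2 i) - f θ i (p.1 i))
        ∂(Measure.pi ν).prod (Measure.pi ν) := by
  have hbound (σ : ι → ℤˣ) (θ : Θ) (p : (ι → Z) × (ι → Z)) :
      |∑ i, σ i • (f θ i (p.2 i) - f θ i (p.1 i))| ≤ ∑ i, (C i + C i) :=
    abs_sum_int_units_smul_le
      (fun i => (abs_sub _ _).trans (add_le_add (hf θ i _) (hf θ i _))) σ
  have hint (σ : ι → ℤˣ) := integrable_ciSup_of_forall_abs_le (fun θ => by
    simp only [Units.smul_def]; fun_prop) (hbound σ) ((Measure.pi ν).prod (Measure.pi ν))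
  simp only [rademacherAverage]
  rw [integral_expect fun σ _ => hint σ,
    ← Finset.expect_congr rfl fun σ _ =>
      integral_iSup_sum_sub_eq_integral_iSup_sum_smul_sub ν hfm σ,
    Finset.expect_const Finset.univ_nonempty]

theorem integrable_iSup_deviation (hfm : ∀ θ i, Measurable (f θ i))
    (hf : ∀ θ i z, |f θ i z| ≤ C i) :
    Integrable (fun ω => ⨆ θ, deviation ν (f θ) ω) (Measure.pi ν) :=
  integrable_ciSup_of_forall_abs_le (fun θ => measurable_deviation ν (hfm θ))
    (fun θ => abs_deviation_le ν (hf θ)) _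

theorem integral_iSup_deviation_le_integral_iSup_sum_sub (hfm : ∀ θ i, Measurable (f θ i))
    (hf : ∀ θ i z, |f θ i z| ≤ C i) :
    ∫ ω, ⨆ θ, deviation ν (f θ) ω ∂Measure.pi ν ≤
      ∫ p, ⨆ θ, ∑ i, (f θ i (p.2 i) - f θ i (p.1 i)) ∂(Measure.pi ν).prod (Measure.pi ν) := by
  have hbound (θ : Θ) (p : (ι → Z) × (ι → Z)) :
      |∑ i, (f θ i (p.2 i) - f θ i (p.1 i))| ≤ ∑ i, (C i + C i) :=
    (Finset.abs_sum_le_sum_abs _ _).trans <| Finset.sum_le_sum fun i _ =>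
      (abs_sub _ _).trans (add_le_add (hf θ i _) (hf θ i _))
  have hmeas (θ : Θ) : Measurable fun p : (ι → Z) × (ι → Z) =>
      ∑ i, (f θ i (p.2 i) - f θ i (p.1 i)) := by fun_prop
  have hint := integrable_ciSup_of_forall_abs_le hmeas hbound
    ((Measure.pi ν).prod (Measure.pi ν))
  rw [integral_prod _ hint]
  refine integral_mono (integrable_iSup_deviation ν hfm hf) hint.integral_prod_left fun ω => ?_
  simp only [fun θ => deviation_eq_integral ν
    (fun i => Integrable.of_bound (hfm θ i).aestronglyMeasurable (C i) (ae_of_all _ (hf θ i))) ω]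
  exact ciSup_integral_le_integral_ciSup (fun θ => (hmeas θ).comp measurable_prodMk_left)
    (fun θ ω' => hbound θ (ω, ω')) _

theorem integral_iSup_deviation_le [DecidableEq ι] (hfm : ∀ θ i, Measurable (f θ i))
    (hf : ∀ θ i z, |f θ i z| ≤ C i) :
    ∫ ω, ⨆ θ, deviation ν (f θ) ω ∂Measure.pi ν ≤
      2 * ∫ ω, rademacherAverage (fun θ i => f θ i (ω i)) ∂Measure.pi ν := by
  set P := Measure.pi ν
  have hrad := integrable_rademacherAverage (g := fun θ i (ω : ι → Z) => f θ i (ω i))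
    (fun θ i => by fun_prop) (fun θ i ω => hf θ i (ω i)) P
  calc ∫ ω, ⨆ θ, deviation ν (f θ) ω ∂P
      ≤ ∫ p, rademacherAverage (fun θ i => f θ i (p.2 i) - f θ i (p.1 i)) ∂P.prod P :=
        (integral_iSup_deviation_le_integral_iSup_sum_sub ν hfm hf).trans_eq
          (integral_iSup_sum_sub_eq_integral_rademacherAverage ν hfm hf)
    _ ≤ ∫ p, (rademacherAverage (fun θ i => f θ i (p.2 i)) +
          rademacherAverage fun θ i => f θ i (p.1 i)) ∂P.prod P := by
        refine integral_mono (integrable_rademacherAverage (C := fun i => C i + C i)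
          (g := fun θ i (p : (ι → Z) × (ι → Z)) => f θ i (p.2 i) - f θ i (p.1 i))
          (fun θ i => by fun_prop) (fun θ i p => ?_) _) ((hrad.comp_snd P).add (hrad.comp_fst P))
          fun p => rademacherAverage_sub_le (fun θ i => hf θ i _) fun θ i => hf θ i _
        exact (abs_sub _ _).trans (add_le_add (hf θ i _) (hf θ i _))
    _ = 2 * ∫ ω, rademacherAverage (fun θ i => f θ i (ω i)) ∂P := by
        have fst_eq := integral_fun_fst (μ := P) (ν := P)
          fun ω => rademacherAverage fun θ i => f θ i (ω i)
        have snd_eq := integral_fun_snd (μ := P) (ν := P)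
          fun ω => rademacherAverage fun θ i => f θ i (ω i)
        simp only [probReal_univ, one_smul] at fst_eq snd_eq
        rw [integral_add (hrad.comp_snd P) (hrad.comp_fst P), fst_eq, snd_eq, two_mul]

end Symmetrization

theorem measure_sqrt_lt_le_of_hasSubgaussianMGF {Ω : Type*} [MeasurableSpace Ω] {μ : Measure Ω}
    [IsProbabilityMeasure μ] {X : Ω → ℝ} {v : ℝ≥0} (hX : HasSubgaussianMGF X v μ) {δ : ℝ}
    (hδ : 0 < δ) : μ {ω | √(2 * v * Real.log (1 / δ)) < X ω} ≤ ENNReal.ofReal δ := by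
  rcases le_or_gt 1 δ with hδ1 | hδ1
  · exact prob_le_one.trans (ENNReal.one_le_ofReal.2 hδ1)
  rcases eq_or_ne v 0 with rfl | hv
  · refine le_of_eq_of_le (measure_eq_zero_iff_ae_notMem.2 ?_) zero_le
    filter_upwards [hX.ae_eq_zero_of_hasSubgaussianMGF_zero] with ω hω
    simp [hω]
  have hlog : 0 ≤ Real.log (1 / δ) := Real.log_nonneg ((one_le_div hδ).2 hδ1.le)
  refine (measure_mono (Set.ofPred_subset_ofPred.2 fun ω hω => hω.le)).trans ?_
  rw [← ENNReal.ofReal_toReal (measure_ne_top μ {ω | _ ≤ X ω})]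
  refine ENNReal.ofReal_le_ofReal ((hX.measure_ge_le (Real.sqrt_nonneg _)).trans_eq ?_)
  rw [Real.sq_sqrt (by positivity), neg_div, mul_div_cancel_left₀ _ (by positivity), one_div,
    Real.log_inv, neg_neg, Real.exp_log hδ]

theorem hasSubgaussianMGF_sub_integral_of_abs_sub_le {Ω : Type*} [MeasurableSpace Ω]
    {μ : Measure Ω} [IsProbabilityMeasure μ] {X : Ω → ℝ} (hX : Measurable X) {c : ℝ≥0}
    (hc : ∀ ω ω', |X ω - X ω'| ≤ c) :
    HasSubgaussianMGF (fun ω => X ω - ∫ x, X x ∂μ) ((c / 2) ^ 2) μ := by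
  obtain ⟨ω₀⟩ := nonempty_of_isProbabilityMeasure μ
  have : Nonempty Ω := ⟨ω₀⟩
  have hbdd : BddBelow (Set.range X) :=
    ⟨X ω₀ - c, Set.forall_mem_range.2 fun ω => sub_le_comm.1 ((le_abs_self _).trans (hc ω₀ ω))⟩
  have hmem (ω : Ω) : X ω ∈ Set.Icc (⨅ ω, X ω) ((⨅ ω, X ω) + c) :=
    ⟨ciInf_le hbdd ω, tsub_le_iff_right.1 (le_ciInf fun ω' =>
      sub_le_comm.1 ((le_abs_self _).trans (hc ω ω')))⟩
  simpa using hasSubgaussianMGF_of_mem_Icc hX.aemeasurable (ae_of_all μ hmem)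

theorem hasSubgaussianMGF_add_prod {Ω Ω' : Type*} [MeasurableSpace Ω] [MeasurableSpace Ω']
    {μ : Measure Ω} [SFinite μ] {ν : Measure Ω'} [SFinite ν] {X : Ω → ℝ} {Y : Ω × Ω' → ℝ}
    {cX cY : ℝ≥0} (hX : HasSubgaussianMGF X cX μ) (hYm : Measurable Y)
    (hY : ∀ ω, HasSubgaussianMGF (fun ω' => Y (ω, ω')) cY ν) :
    HasSubgaussianMGF (fun p => X p.1 + Y p) (cX + cY) (μ.prod ν) := by
  have exp_add_eq (t : ℝ) (ω : Ω) (ω' : Ω') : Real.exp (t * (X ω + Y (ω, ω'))) =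
      Real.exp (t * X ω) * Real.exp (t * Y (ω, ω')) := by rw [mul_add, Real.exp_add]
  have inner_integral_le (t : ℝ) (ω : Ω) : ∫ ω', Real.exp (t * (X ω + Y (ω, ω'))) ∂ν ≤
      Real.exp (t * X ω) * Real.exp (cY * t ^ 2 / 2) := by
    simp only [exp_add_eq, integral_const_mul]
    exact mul_le_mul_of_nonneg_left ((hY ω).mgf_le t) (Real.exp_nonneg _)
  have hmeas (t : ℝ) :
      AEStronglyMeasurable (fun p => Real.exp (t * (X p.1 + Y p))) (μ.prod ν) := by
    have := (hX.aemeasurable.comp_fst (ν := ν)).add hYm.aemeasurable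
    exact (Real.measurable_exp.comp_aemeasurable (this.const_mul t)).aestronglyMeasurable
  have hint (t : ℝ) : Integrable (fun p => Real.exp (t * (X p.1 + Y p))) (μ.prod ν) := by
    refine (integrable_prod_iff (hmeas t)).2 ⟨ae_of_all _ fun ω => ?_, ?_⟩
    · simp only [exp_add_eq]
      exact ((hY ω).integrable_exp_mul t).const_mul _
    · refine ((hX.integrable_exp_mul t).mul_const (Real.exp (cY * t ^ 2 / 2))).mono'
        (hmeas t).norm.integral_prod_right' (ae_of_all _ fun ω => ?_)
      simp only [Real.norm_eq_abs, Real.abs_exp]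
      rw [abs_of_nonneg (integral_nonneg fun _ => Real.exp_nonneg _)]
      exact inner_integral_le t ω
  refine ⟨hint, fun t => ?_⟩
  calc ∫ p, Real.exp (t * (X p.1 + Y p)) ∂μ.prod ν
      = ∫ ω, ∫ ω', Real.exp (t * (X ω + Y (ω, ω'))) ∂ν ∂μ := integral_prod _ (hint t)
    _ ≤ ∫ ω, Real.exp (t * X ω) * Real.exp (cY * t ^ 2 / 2) ∂μ :=
        integral_mono (hint t).integral_prod_left ((hX.integrable_exp_mul t).mul_const _)
          (inner_integral_le t)
    _ = mgf X μ t * Real.exp (cY * t ^ 2 / 2) := integral_mul_const _ _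
    _ ≤ Real.exp (cX * t ^ 2 / 2) * Real.exp (cY * t ^ 2 / 2) := by
        gcongr
        exact hX.mgf_le t
    _ = Real.exp ((cX + cY : ℝ≥0) * t ^ 2 / 2) := by
        rw [← Real.exp_add, NNReal.coe_add]
        ring_nf

theorem measurePreserving_fin_cons {n : ℕ} {Z : Type*} [MeasurableSpace Z]
    (ν : Fin (n + 1) → Measure Z) [∀ i, SigmaFinite (ν i)] :
    MeasurePreserving (fun p : Z × (Fin n → Z) => (Fin.cons p.1 p.2 : Fin (n + 1) → Z))
      ((ν 0).prod (Measure.pi fun i => ν i.succ)) (Measure.pi ν) := by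
  simpa [MeasurableEquiv.piFinSuccAbove_symm_apply, Fin.insertNthEquiv] using
    (measurePreserving_piFinSuccAbove ν 0).symm

section BoundedDifferences

/-- The bounded differences property: altering the argument in coordinate `i` alone changes the
value by at most `c i`. -/
def HasBoundedDifferences {ι Z : Type*} [DecidableEq ι] (f : (ι → Z) → ℝ) (c : ι → ℝ≥0) : Prop :=
  ∀ ω i z, |f (Function.update ω i z) - f ω| ≤ c i

namespace HasBoundedDifferences

variable {ι Z : Type*} [DecidableEq ι] {f : (ι → Z) → ℝ} {c : ι → ℝ≥0}

theorem abs_sub_le [Fintype ι] (hf : HasBoundedDifferences f c) (ω ω' : ι → Z) :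
    |f ω' - f ω| ≤ ∑ i, c i := by
  suffices h : ∀ s : Finset ι, |f (s.piecewise ω' ω) - f ω| ≤ ∑ i ∈ s, c i by
    simpa using h Finset.univ
  intro s
  induction s using Finset.induction_on with
  | empty => simp
  | insert i s hi ih =>
    rw [Finset.piecewise_insert, Finset.sum_insert hi]
    exact (_root_.abs_sub_le _ _ _).trans (add_le_add (hf _ i _) ih)

theorem comp_piCongrLeft {κ : Type*} [DecidableEq κ] (hf : HasBoundedDifferences f c) (e : κ ≃ ι) :
    HasBoundedDifferences (fun ω => f (Equiv.piCongrLeft (fun _ => Z) e ω)) (c ∘ e) := by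
  intro ω i z
  convert! hf (Equiv.piCongrLeft (fun _ => Z) e ω) (e i) z
  ext j
  obtain ⟨j, rfl⟩ := e.surjective j
  simp [Function.update_apply]

theorem fin_cons {n : ℕ} {f : (Fin (n + 1) → Z) → ℝ} {c : Fin (n + 1) → ℝ≥0}
    (hf : HasBoundedDifferences f c) (z : Z) :
    HasBoundedDifferences (fun w => f (Fin.cons z w)) fun i => c i.succ := fun w i y => by
  simpa only [Fin.cons_update] using hf (Fin.cons z w) i.succ y

variable [MeasurableSpace Z]

theorem integrable [Finite ι] (hf : HasBoundedDifferences f c) (hfm : Measurable f)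
    (P : Measure (ι → Z)) [IsFiniteMeasure P] : Integrable f P := by
  have := Fintype.ofFinite ι
  rcases isEmpty_or_nonempty (ι → Z) with h | ⟨⟨ω₀⟩⟩
  · exact Integrable.of_isEmpty
  refine Integrable.of_bound hfm.aestronglyMeasurable (|f ω₀| + ∑ i, c i) (ae_of_all _ fun ω => ?_)
  have := abs_sub_abs_le_abs_sub (f ω) (f ω₀)
  rw [Real.norm_eq_abs]
  linarith [hf.abs_sub_le ω₀ ω]

theorem abs_integral_fin_cons_sub_le {n : ℕ} {f : (Fin (n + 1) → Z) → ℝ} {c : Fin (n + 1) → ℝ≥0}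
    (hf : HasBoundedDifferences f c) {P : Measure (Fin n → Z)} [IsProbabilityMeasure P]
    (hint : ∀ z, Integrable (fun w => f (Fin.cons z w)) P) (z z' : Z) :
    |∫ w, f (Fin.cons z w) ∂P - ∫ w, f (Fin.cons z' w) ∂P| ≤ c 0 := by
  rw [← integral_sub (hint z) (hint z'), ← Real.norm_eq_abs]
  have pointwise (w : Fin n → Z) : ‖f (Fin.cons z w) - f (Fin.cons z' w)‖ ≤ c 0 := by
    simpa using hf (Fin.cons z' w) 0 z
  simpa using norm_integral_le_of_norm_le_const (ae_of_all P pointwise)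

/-- Revealing the first coordinate splits the fluctuation into two conditionally centred parts. -/
theorem hasSubgaussianMGF_fin {n : ℕ} {f : (Fin n → Z) → ℝ} {c : Fin n → ℝ≥0}
    (hf : HasBoundedDifferences f c) (hfm : Measurable f) (ν : Fin n → Measure Z)
    [∀ i, IsProbabilityMeasure (ν i)] :
    HasSubgaussianMGF (fun ω => f ω - ∫ x, f x ∂Measure.pi ν) (∑ i, (c i / 2) ^ 2)
      (Measure.pi ν) := by
  induction n with
  | zero =>
    have (ω : Fin 0 → Z) : f ω - ∫ x, f x ∂Measure.pi ν = 0 := by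
      simp [Subsingleton.elim _ ω]
    simp [this]
  | succ n ih =>
    set P := Measure.pi fun i : Fin n => ν i.succ
    set g : Z → ℝ := fun z => ∫ w, f (Fin.cons z w) ∂P
    have cons := measurePreserving_fin_cons ν
    have cons_measurable : Measurable fun p : Z × (Fin n → Z) => f (Fin.cons p.1 p.2) :=
      hfm.comp cons.measurable
    have slice_measurable (z : Z) : Measurable fun w : Fin n → Z => f (Fin.cons z w) :=
      cons_measurable.comp measurable_prodMk_left
    have slice_integrable (z : Z) : Integrable (fun w : Fin n → Z => f (Fin.cons z w)) P :=
      (hf.fin_cons z).integrable (slice_measurable z) P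
    have g_measurable : Measurable g :=
      cons_measurable.stronglyMeasurable.integral_prod_right.measurable
    have integral_eq : ∫ ω, f ω ∂Measure.pi ν = ∫ z, g z ∂ν 0 := by
      rw [← cons.map_eq, integral_map cons.measurable.aemeasurable hfm.aestronglyMeasurable]
      exact integral_prod _ (cons.integrable_comp_of_integrable (hf.integrable hfm _))
    have split := hasSubgaussianMGF_add_prod
      (hasSubgaussianMGF_sub_integral_of_abs_sub_le (μ := ν 0) g_measurable
        (hf.abs_integral_fin_cons_sub_le slice_integrable))
      (Y := fun p => f (Fin.cons p.1 p.2) - g p.1)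
      (cons_measurable.sub (g_measurable.comp measurable_fst))
      fun z => ih (hf.fin_cons z) (slice_measurable z) fun i => ν i.succ
    have uncons := measurePreserving_piFinSuccAbove ν 0
    rw [Fin.sum_univ_succ]
    refine (HasSubgaussianMGF.of_map uncons.measurable.aemeasurable
      (uncons.map_eq.symm ▸ split)).congr (ae_of_all _ fun ω => ?_)
    have cons_uncons : Fin.cons (ω 0) (Fin.tail ω) = ω := Fin.cons_self_tail ω
    simp only [Function.comp_apply, MeasurableEquiv.piFinSuccAbove_apply, integral_eq,
      Fin.insertNthEquiv_zero, Fin.consEquiv_symm_apply, cons_uncons]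
    ring

theorem hasSubgaussianMGF [Fintype ι]
    (hf : HasBoundedDifferences f c) (hfm : Measurable f) (ν : ι → Measure Z)
    [∀ i, IsProbabilityMeasure (ν i)] :
    HasSubgaussianMGF (fun ω => f ω - ∫ x, f x ∂Measure.pi ν) (∑ i, (c i / 2) ^ 2)
      (Measure.pi ν) := by
  let e := (Fintype.equivFin ι).symm
  have he := measurePreserving_piCongrLeft ν e
  have integral_eq : ∫ ω, f (Equiv.piCongrLeft (fun _ => Z) e ω) ∂Measure.pi (fun k => ν (e k)) =
      ∫ ω, f ω ∂Measure.pi ν := he.integral_comp' f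
  have reindexed := (hf.comp_piCongrLeft e).hasSubgaussianMGF_fin (hfm.comp he.measurable)
    fun k => ν (e k)
  rw [integral_eq, ← (he.symm _).map_eq] at reindexed
  refine (Equiv.sum_comp e fun i => (c i / 2) ^ 2) ▸
    (reindexed.of_map (he.symm _).measurable.aemeasurable).congr (ae_of_all _ fun ω => ?_)
  exact congrArg (f · - _) ((Equiv.piCongrLeft (fun _ => Z) e).apply_symm_apply ω)

end HasBoundedDifferences

end BoundedDifferences

section UniformDeviation

variable {Θ ι Z : Type*} [Fintype ι] [MeasurableSpace Z] (ν : ι → Measure Z)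
  [∀ i, IsProbabilityMeasure (ν i)] {f : Θ → ι → Z → ℝ} {C : ι → ℝ≥0}

theorem continuous_deviation [TopologicalSpace Θ] [FirstCountableTopology Θ]
    (hfm : ∀ θ i, Measurable (f θ i)) (hfc : ∀ i z, Continuous fun θ => f θ i z)
    (hf : ∀ θ i z, |f θ i z| ≤ C i) (ω : ι → Z) : Continuous fun θ => deviation ν (f θ) ω :=
  continuous_finsetSum _ fun i _ => (continuous_of_dominated (bound := fun _ => C i)
    (fun θ => (hfm θ i).aestronglyMeasurable) (fun θ => ae_of_all _ (hf θ i))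
    (integrable_const _) (ae_of_all _ (hfc i))).sub (hfc i (ω i))

variable [DecidableEq ι] [Nonempty Θ]

theorem hasBoundedDifferences_iSup_deviation (hf : ∀ θ i z, f θ i z ∈ Set.Icc 0 (C i : ℝ)) :
    HasBoundedDifferences (fun ω => ⨆ θ, deviation ν (f θ) ω) C := by
  have hbdd (ω : ι → Z) : BddAbove (Set.range fun θ => deviation ν (f θ) ω) :=
    bddAbove_range_of_forall_abs_le fun θ => abs_deviation_le ν
      (fun i z => (abs_of_nonneg (hf θ i z).1).trans_le (hf θ i z).2) ω
  intro ω i z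
  refine abs_ciSup_sub_ciSup_le (hbdd _) (hbdd _) fun θ => ?_
  rw [deviation_update_sub]
  exact abs_sub_le_of_nonneg_of_le (hf θ i _).1 (hf θ i _).2 (hf θ i _).1 (hf θ i _).2

theorem measure_exists_lt_deviation_le_of_countable [Countable Θ]
    (hfm : ∀ θ i, Measurable (f θ i)) (hf : ∀ θ i z, f θ i z ∈ Set.Icc 0 (C i : ℝ)) {R : ℝ}
    (hR : ∀ᵐ ω ∂Measure.pi ν, rademacherAverage (fun θ i => f θ i (ω i)) ≤ R) {δ : ℝ}
    (hδ : 0 < δ) :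
    Measure.pi ν {ω | ∃ θ, 2 * R + √(Real.log (1 / δ) * (∑ i, (C i : ℝ) ^ 2) / 2) <
      deviation ν (f θ) ω} ≤ ENNReal.ofReal δ := by
  have habs (θ : Θ) (i : ι) (z : Z) : |f θ i z| ≤ C i :=
    (abs_of_nonneg (hf θ i z).1).trans_le (hf θ i z).2
  have mean_le : ∫ ω, ⨆ θ, deviation ν (f θ) ω ∂Measure.pi ν ≤ 2 * R := by
    refine (integral_iSup_deviation_le ν hfm habs).trans ?_
    gcongr
    simpa using integral_mono_ae (integrable_rademacherAverage
      (g := fun θ i (ω : ι → Z) => f θ i (ω i)) (fun θ i => by fun_prop)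
      (fun θ i ω => habs θ i (ω i)) _) (integrable_const R) hR
  refine (measure_mono ?_).trans (measure_sqrt_lt_le_of_hasSubgaussianMGF
    ((hasBoundedDifferences_iSup_deviation ν hf).hasSubgaussianMGF
      (Measurable.iSup fun θ => measurable_deviation ν (hfm θ)) ν) hδ)
  rintro ω ⟨θ, hθ⟩
  have le_sup := le_ciSup (bddAbove_range_of_forall_abs_le fun θ =>
    abs_deviation_le ν (habs θ) ω) θ
  have variance_eq : 2 * ((∑ i, (C i / 2) ^ 2 : ℝ≥0) : ℝ) * Real.log (1 / δ) =
      Real.log (1 / δ) * (∑ i, (C i : ℝ) ^ 2) / 2 := by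
    push_cast
    simp only [div_pow, ← Finset.sum_div]
    ring
  simp only [Set.mem_ofPred_eq, variance_eq]
  linarith

theorem measure_exists_lt_deviation_le [TopologicalSpace Θ] [FirstCountableTopology Θ]
    [TopologicalSpace.SeparableSpace Θ] (hfm : ∀ θ i, Measurable (f θ i))
    (hfc : ∀ i z, Continuous fun θ => f θ i z) (hf : ∀ θ i z, f θ i z ∈ Set.Icc 0 (C i : ℝ))
    {R : ℝ} (hR : ∀ᵐ ω ∂Measure.pi ν, rademacherAverage (fun θ i => f θ i (ω i)) ≤ R) {δ : ℝ}
    (hδ : 0 < δ) :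
    Measure.pi ν {ω | ∃ θ, 2 * R + √(Real.log (1 / δ) * (∑ i, (C i : ℝ) ^ 2) / 2) <
      deviation ν (f θ) ω} ≤ ENNReal.ofReal δ := by
  have habs (θ : Θ) (i : ι) (z : Z) : |f θ i z| ≤ C i :=
    (abs_of_nonneg (hf θ i z).1).trans_le (hf θ i z).2
  set q := TopologicalSpace.denseSeq Θ
  refine (measure_mono ?_).trans (measure_exists_lt_deviation_le_of_countable ν
    (fun k => hfm (q k)) (fun k => hf (q k)) (hR.mono fun ω hω =>
      (rademacherAverage_comp_right_le (fun θ i => habs θ i (ω i)) q).trans hω) hδ)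
  rintro ω ⟨θ, hθ⟩
  exact (TopologicalSpace.denseRange_denseSeq Θ).exists_mem_open
    (isOpen_lt continuous_const (continuous_deviation ν hfm hfc habs ω)) ⟨θ, hθ⟩

end UniformDeviation

section Multitask

theorem measurePreserving_curry {ι κ Z : Type*} [Fintype ι] [Fintype κ] [MeasurableSpace Z]
    (ν : ι → κ → Measure Z) [∀ i k, IsProbabilityMeasure (ν i k)] :
    MeasurePreserving (MeasurableEquiv.curry ι κ Z) (Measure.pi fun p : ι × κ => ν p.1 p.2)
      (Measure.pi fun i => Measure.pi (ν i)) :=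
  ⟨MeasurableEquiv.measurable _, by
    simpa only [Measure.infinitePi_eq_pi] using Measure.infinitePi_map_curry ν⟩

theorem ae_pi_forall_of_forall_ae {ι Z : Type*} [Fintype ι] [MeasurableSpace Z]
    {ν : ι → Measure Z} [∀ i, SigmaFinite (ν i)] {p : ι → Z → Prop}
    (h : ∀ i, ∀ᵐ z ∂ν i, p i z) : ∀ᵐ ω ∂Measure.pi ν, ∀ i, p i (ω i) :=
  ae_all_iff.2 fun i => Measure.tendsto_eval_ae_ae.eventually (h i)

variable {τ ι E : Type*} [Fintype τ] [Fintype ι] [NormedAddCommGroup E] [InnerProductSpace ℝ E]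
  {R S : ℝ}

theorem inner_single_right [DecidableEq τ] (A : PiLp 2 fun _ : τ => E) (t : τ) (x : E) :
    inner ℝ A (PiLp.single 2 t x) = inner ℝ (A t) x := by
  rw [PiLp.inner_apply, Finset.sum_eq_single t]
  · simp
  · intro s _ hs
    simp [hs]
  · simp

theorem abs_inner_le_of_norm_le {a x : E} {r : ℝ} (ha : ‖a‖ ≤ R) (hx : ‖x‖ ≤ r) :
    |inner ℝ a x| ≤ R * r :=
  (abs_real_inner_le_norm a x).trans
    (mul_le_mul ha hx (norm_nonneg x) ((norm_nonneg a).trans ha))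

/-- A family of task weights is a single vector of `PiLp 2`, paired with features supported on one
task. -/
theorem rademacherAverage_inner_add_le [DecidableEq ι] {Θ : Type*} [Nonempty Θ]
    {A : Θ → PiLp 2 fun _ : τ => E} {a₀ : Θ → E} (hA : ∀ θ, ‖A θ‖ ≤ R) (ha₀ : ∀ θ, ‖a₀ θ‖ ≤ S)
    (task : ι → τ) (x : ι → E) :
    rademacherAverage (fun θ i => inner ℝ (A θ (task i) + a₀ θ) (x i)) ≤
      (R + S) * √(∑ i, ‖x i‖ ^ 2) := by
  classical
  have norm_single (i : ι) : ‖(PiLp.single 2 (task i) (x i) : PiLp 2 fun _ : τ => E)‖ = ‖x i‖ :=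
    PiLp.norm_single _ _ _ _
  simp only [inner_add_left, ← inner_single_right]
  refine (rademacherAverage_add_le
    (fun θ i => abs_inner_le_of_norm_le (hA θ) (norm_single i).le)
    (fun θ i => abs_inner_le_of_norm_le (ha₀ θ) le_rfl)).trans ?_
  rw [add_mul]
  refine add_le_add ?_ (rademacherAverage_inner_le ha₀ x)
  simpa only [norm_single] using rademacherAverage_inner_le hA fun i => PiLp.single 2 (task i) (x i)

theorem rademacherAverage_comp_inner_add_le [DecidableEq ι] {Θ : Type*} [Nonempty Θ]
    {A : Θ → PiLp 2 fun _ : τ => E} {a₀ : Θ → E} (hA : ∀ θ, ‖A θ‖ ≤ R) (ha₀ : ∀ θ, ‖a₀ θ‖ ≤ S)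
    {c : ℝ≥0} {φ : ι → ℝ → ℝ} (hφ : ∀ i, LipschitzWith c (φ i)) {task : ι → τ} {x : ι → E}
    {C : ι → ℝ} (hφw : ∀ θ i, |φ i (inner ℝ (A θ (task i) + a₀ θ) (x i))| ≤ C i) {r : ℝ}
    (hx : ∀ i, ‖x i‖ ≤ r) :
    rademacherAverage (fun θ i => φ i (inner ℝ (A θ (task i) + a₀ θ) (x i))) ≤
      c * ((R + S) * √(Fintype.card ι * r ^ 2)) := by
  have norm_weight_le (θ : Θ) (t : τ) : ‖A θ t + a₀ θ‖ ≤ R + S :=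
    (norm_add_le _ _).trans (add_le_add ((PiLp.norm_apply_le _ _).trans (hA θ)) (ha₀ θ))
  have hRS : 0 ≤ R + S :=
    add_nonneg ((norm_nonneg _).trans (hA (Classical.arbitrary Θ)))
      ((norm_nonneg _).trans (ha₀ (Classical.arbitrary Θ)))
  have sum_sq_le : ∑ i, ‖x i‖ ^ 2 ≤ Fintype.card ι * r ^ 2 := by
    refine (Finset.sum_le_card_nsmul _ _ (r ^ 2) fun i _ => ?_).trans_eq (nsmul_eq_mul _ _)
    gcongr
    exact hx i
  calc rademacherAverage (fun θ i => φ i (inner ℝ (A θ (task i) + a₀ θ) (x i)))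
      ≤ c * rademacherAverage (fun θ i => inner ℝ (A θ (task i) + a₀ θ) (x i)) :=
        rademacherAverage_comp_le hφ hφw
          fun θ i => abs_inner_le_of_norm_le (norm_weight_le θ (task i)) (hx i)
    _ ≤ c * ((R + S) * √(∑ i, ‖x i‖ ^ 2)) := by
        gcongr
        exact rademacherAverage_inner_add_le hA ha₀ task x
    _ ≤ c * ((R + S) * √(Fintype.card ι * r ^ 2)) := by gcongr

variable {Z : Type*} [MeasurableSpace Z] [MeasurableSpace E] [BorelSpace E]
  [SecondCountableTopology E] {x : Z → E} {l : Z → ℝ → ℝ} {B c : ℝ≥0} {r δ : ℝ}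

theorem measure_exists_lt_multitask_deviation_le (ν : ι → Measure Z)
    [∀ i, IsProbabilityMeasure (ν i)] (task : ι → τ) (hx : Measurable x)
    (hl : Measurable l.uncurry) (hlB : ∀ z s, l z s ∈ Set.Icc 0 (B : ℝ))
    (hlc : ∀ z, LipschitzWith c (l z)) (hxr : ∀ i, ∀ᵐ z ∂ν i, ‖x z‖ ≤ r)
    (hR : 0 ≤ R) (hS : 0 ≤ S) (hδ : 0 < δ) :
    Measure.pi ν {ω | ∃ (A : PiLp 2 fun _ : τ => E) (a₀ : E), ‖A‖ ≤ R ∧ ‖a₀‖ ≤ S ∧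
      2 * (c * ((R + S) * √(Fintype.card ι * r ^ 2))) +
          √(Real.log (1 / δ) * (Fintype.card ι * (B : ℝ) ^ 2) / 2) <
        deviation ν (fun i z => l z (inner ℝ (A (task i) + a₀) (x z))) ω} ≤ ENNReal.ofReal δ := by
  classical
  set Θ := {p : (PiLp 2 fun _ : τ => E) × E // ‖p.1‖ ≤ R ∧ ‖p.2‖ ≤ S}
  have : Nonempty Θ := ⟨⟨0, by simpa using ⟨hR, hS⟩⟩⟩
  set w : Θ → ι → Z → ℝ := fun θ i z => inner ℝ (θ.1.1 (task i) + θ.1.2) (x z)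
  have rademacher_le : ∀ᵐ ω ∂Measure.pi ν, rademacherAverage (fun θ i => l (ω i) (w θ i (ω i))) ≤
      c * ((R + S) * √(Fintype.card ι * r ^ 2)) :=
    (ae_pi_forall_of_forall_ae hxr).mono fun ω hω =>
      rademacherAverage_comp_inner_add_le (C := fun _ => (B : ℝ)) (fun θ : Θ => θ.2.1)
        (fun θ => θ.2.2) (fun i => hlc (ω i))
        (fun _ _ => (abs_of_nonneg (hlB _ _).1).trans_le (hlB _ _).2) hω
  have tail := measure_exists_lt_deviation_le ν (C := fun _ => B)
    (fun θ i => hl.comp (measurable_id.prodMk (by fun_prop)))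
    (fun i z => (hlc z).continuous.comp (by fun_prop)) (fun θ i z => hlB z (w θ i z))
    rademacher_le hδ
  simp only [Finset.sum_const, Finset.card_univ, nsmul_eq_mul] at tail
  refine (measure_mono ?_).trans tail
  rintro ω ⟨A, a₀, hA, ha₀, hω⟩
  exact ⟨⟨(A, a₀), hA, ha₀⟩, hω⟩

theorem deviation_prod_eq {κ : Type*} [Fintype κ] (μ : τ → Measure Z) (f : τ → Z → ℝ)
    (ω : τ × κ → Z) : deviation (fun p : τ × κ => μ p.1) (fun p => f p.1) ω =
      Fintype.card κ * ∑ t, ∫ z, f t z ∂μ t - ∑ t, ∑ i, f t (ω (t, i)) := by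
  simp only [deviation, Fintype.sum_prod_type, Finset.sum_sub_distrib, Finset.sum_const,
    Finset.card_univ, nsmul_eq_mul, Finset.mul_sum]

theorem mul_multitask_bound_eq {T m γ β L B c r : ℝ} (hT : 0 < T) (hm : 0 < m) (hγ : 0 < γ)
    (hβ : 0 < β) (hB : 0 ≤ B) (hr : 0 ≤ r) :
    T * m * (2 * c * r / √(γ * m) + 2 * c * r / √(β * m * T) + B * √(L / (2 * m * T))) =
      2 * (c * ((√(T / γ) + √(1 / β)) * √(T * m * r ^ 2))) + √(L * (T * m * B ^ 2) / 2) := by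
  have task_eq : √(T / γ) * √(T * m * r ^ 2) = T * m * r / √(γ * m) := by
    rw [← Real.sqrt_mul (by positivity), ← Real.sqrt_sq (by positivity : 0 ≤ T * m * r),
      ← Real.sqrt_div (by positivity)]
    congr 1
    field_simp
  have shared_eq : √(1 / β) * √(T * m * r ^ 2) = T * m * r / √(β * m * T) := by
    rw [← Real.sqrt_mul (by positivity), ← Real.sqrt_sq (by positivity : 0 ≤ T * m * r),
      ← Real.sqrt_div (by positivity)]
    congr 1
    field_simp
  have tail_eq : √(L * (T * m * B ^ 2) / 2) = T * m * B * √(L / (2 * m * T)) := by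
    rw [← Real.sqrt_sq (by positivity : 0 ≤ T * m * B), ← Real.sqrt_mul (by positivity)]
    congr 1
    field_simp
  rw [tail_eq, add_mul, task_eq, shared_eq]
  ring

end Multitask

theorem one_sub_le_measure_of_measure_compl_le {Ω : Type*} [MeasurableSpace Ω] {P : Measure Ω}
    [IsProbabilityMeasure P] {s : Set Ω} {ε : ENNReal} (h : P sᶜ ≤ ε) : 1 - ε ≤ P s := by
  rw [tsub_le_iff_right, ← measure_univ (μ := P)]
  exact (measure_univ_le_add_compl s).trans (by gcongr)

theorem multitask_generalization_bound_general {T m : ℕ} [NeZero T] [NeZero m]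
    {E Z : Type*} [NormedAddCommGroup E] [InnerProductSpace ℝ E] [SecondCountableTopology E]
    [MeasurableSpace E] [BorelSpace E] [MeasurableSpace Z]
    (μ : Fin T → Measure Z) [∀ t, IsProbabilityMeasure (μ t)] {x : Z → E} (hx : Measurable x)
    {l : Z → ℝ → ℝ} (hl : Measurable l.uncurry) {B c : ℝ≥0}
    (hlB : ∀ z s, l z s ∈ Set.Icc 0 (B : ℝ)) (hlc : ∀ z, LipschitzWith c (l z)) {r γ β δ : ℝ}
    (hxr : ∀ t, ∀ᵐ z ∂μ t, ‖x z‖ ≤ r) (hγ : 0 < γ) (hβ : 0 < β) (hδ : 0 < δ) :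
    1 - ENNReal.ofReal δ ≤
      (Measure.pi fun t : Fin T => Measure.pi fun _ : Fin m => μ t)
        {ω | ∀ (a : Fin T → E) (a₀ : E),
          ∑ t, ‖a t‖ ^ 2 ≤ T / γ → ‖a₀‖ ^ 2 ≤ 1 / β →
          (1 / (T : ℝ)) * (∑ t, ∫ z, l z (inner ℝ (a t + a₀) (x z)) ∂μ t) -
              (1 / (T : ℝ)) * ∑ t, (1 / (m : ℝ)) *
                ∑ i, l (ω t i) (inner ℝ (a t + a₀) (x (ω t i))) ≤
            2 * c * r / √(γ * m) + 2 * c * r / √(β * m * T) +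
              B * √(Real.log (1 / δ) / (2 * m * T))} := by
  have hT : (0 : ℝ) < T := Nat.cast_pos.2 (NeZero.pos T)
  have hm : (0 : ℝ) < m := Nat.cast_pos.2 (NeZero.pos m)
  have hr : 0 ≤ r := (hxr 0).exists.elim fun z hz => (norm_nonneg (x z)).trans hz
  have curry := measurePreserving_curry fun (t : Fin T) (_ : Fin m) => μ t
  have tail := measure_exists_lt_multitask_deviation_le (fun p : Fin T × Fin m => μ p.1) Prod.fst
    hx hl hlB hlc (fun p => hxr p.1) (Real.sqrt_nonneg (T / γ)) (Real.sqrt_nonneg (1 / β)) hδ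
  rw [← curry.symm.map_eq, MeasurableEquiv.map_apply] at tail
  refine one_sub_le_measure_of_measure_compl_le ((measure_mono fun ω hω => ?_).trans tail)
  simp only [Set.mem_compl_iff, Set.mem_ofPred_eq, not_forall, not_le] at hω
  obtain ⟨a, a₀, ha, ha₀, hgap⟩ := hω
  refine ⟨WithLp.toLp 2 a, a₀, Real.le_sqrt_of_sq_le ?_, Real.le_sqrt_of_sq_le ha₀, ?_⟩
  · rwa [PiLp.norm_sq_eq_of_L2]
  have scaled_gap := mul_lt_mul_of_pos_left hgap (mul_pos hT hm)
  rw [mul_multitask_bound_eq hT hm hγ hβ B.coe_nonneg hr, ← Finset.mul_sum] at scaled_gap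
  rw [deviation_prod_eq μ fun t z => l z (inner ℝ (a t + a₀) (x z))]
  simp only [Fintype.card_prod, Fintype.card_fin, Nat.cast_mul]
  refine scaled_gap.trans_eq ?_
  field_simp
  rfl

section LinearAlgebra

variable {d T : ℕ}

theorem sum_norm_sq_col_le_l21_sq (A : Matrix (Fin d) (Fin T) ℝ) :
    ∑ t, ‖WithLp.toLp 2 (A.col t)‖ ^ 2 ≤ l21 A ^ 2 := by
  simp only [EuclideanSpace.real_norm_sq_eq, col_apply]
  rw [Finset.sum_comm, l21]
  refine (Finset.sum_congr rfl fun i _ => ?_).trans_le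
    (Finset.sum_sq_le_sq_sum_of_nonneg fun i _ => Real.sqrt_nonneg (∑ t, A i t ^ 2))
  exact (Real.sq_sqrt (Finset.sum_nonneg fun t _ => sq_nonneg (A i t))).symm

theorem norm_toLp_mulVec_of_transpose_mul_self {U : Matrix (Fin d) (Fin d) ℝ}
    (hU : Uᵀ * U = 1) (x : Fin d → ℝ) : ‖WithLp.toLp 2 (U *ᵥ x)‖ = ‖WithLp.toLp 2 x‖ := by
  have : (U *ᵥ x) ⬝ᵥ (U *ᵥ x) = x ⬝ᵥ x := by
    rw [dotProduct_mulVec, ← mulVec_transpose, mulVec_mulVec, hU, one_mulVec]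
  rw [EuclideanSpace.norm_eq, EuclideanSpace.norm_eq]
  simpa [dotProduct, sq] using congrArg Real.sqrt this

theorem inner_toLp_mulVec_add (U : Matrix (Fin d) (Fin d) ℝ) (a a₀ x : Fin d → ℝ) :
    inner ℝ (WithLp.toLp 2 (U *ᵥ a) + WithLp.toLp 2 (U *ᵥ a₀)) (WithLp.toLp 2 x) =
      (a + a₀) ⬝ᵥ Uᵀ *ᵥ x := by
  rw [← WithLp.toLp_add, EuclideanSpace.inner_toLp_toLp, ← mulVec_add, dotProduct_mulVec,
    vecMul_transpose, dotProduct_comm, star_trivial]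

end LinearAlgebra

theorem sqrt_log_one_div_le_three_mul_sqrt_log_two_div {δ k : ℝ} (hδ : 0 < δ) (hk : 0 ≤ k) :
    √(Real.log (1 / δ) / k) ≤ 3 * √(Real.log (2 / δ) / k) := by
  have : √(Real.log (1 / δ) / k) ≤ √(Real.log (2 / δ) / k) := by gcongr; norm_num
  linarith [Real.sqrt_nonneg (Real.log (2 / δ) / k)]

/-- multi-task generalization bound. Under the constraints
‖A‖₂₁² ≤ T/γ, ‖a₀‖₂² ≤ 1/β with U orthogonal, a c-admissible loss bounded by B,
m samples per task, and sample feature vectors of norm at most r, with probability at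
least 1 − δ the average generalization gap is at most
2cr/√(γm) + 2cr/√(βmT) + 3B√(ln(2/δ)/(2mT)), uniformly over (A, a₀, U). -/
theorem multitask_generalization_bound {d T m : ℕ} [NeZero T] [NeZero m]
    (μ : Fin T → Measure ((Fin d → ℝ) × ℝ)) [∀ t, IsProbabilityMeasure (μ t)]
    (l : ℝ → ℝ → ℝ) (B c r γ β δ : ℝ)
    (hγ : 0 < γ) (hβ : 0 < β) (hδ : 0 < δ) (hc : 0 ≤ c) (hr : 0 ≤ r)
    (hl_meas : Measurable fun p : ℝ × ℝ => l p.1 p.2)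
    (hl_bdd : ∀ y s : ℝ, l y s ∈ Set.Icc 0 B)
    (hadm : ∀ y s s' : ℝ, |l y s - l y s'| ≤ c * |s - s'|)
    (hx : ∀ t, ∀ᵐ p ∂μ t, Real.sqrt (∑ j, p.1 j ^ 2) ≤ r) :
    1 - ENNReal.ofReal δ ≤
      (Measure.pi fun t : Fin T => Measure.pi fun _ : Fin m => μ t)
        {ω | ∀ (A : Matrix (Fin d) (Fin T) ℝ) (a0 : Fin d → ℝ)
            (U : Matrix (Fin d) (Fin d) ℝ),
          l21 A ^ 2 ≤ (T : ℝ) / γ → (∑ j, a0 j ^ 2) ≤ 1 / β → Uᵀ * U = 1 →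
          (1 / (T : ℝ)) * (∑ t, ∫ p, l p.2 ((fun j => A j t + a0 j) ⬝ᵥ Uᵀ.mulVec p.1) ∂μ t) -
              (1 / (T : ℝ)) * ∑ t, (1 / (m : ℝ)) *
                ∑ i, l (ω t i).2 ((fun j => A j t + a0 j) ⬝ᵥ Uᵀ.mulVec (ω t i).1) ≤
            2 * c * r / Real.sqrt (γ * m) + 2 * c * r / Real.sqrt (β * m * T) +
              3 * B * Real.sqrt (Real.log (2 / δ) / (2 * m * T))} := by
  lift B to ℝ≥0 using (hl_bdd 0 0).1.trans (hl_bdd 0 0).2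
  lift c to ℝ≥0 using hc
  have hx' (t : Fin T) : ∀ᵐ p ∂μ t, ‖WithLp.toLp 2 p.1‖ ≤ r := by
    simpa [EuclideanSpace.norm_eq] using hx t
  refine (multitask_generalization_bound_general (m := m) μ (x := fun p => WithLp.toLp 2 p.1)
    (by fun_prop) (l := fun p => l p.2) (by fun_prop) (fun p => hl_bdd p.2)
    (fun p => LipschitzWith.of_dist_le_mul (hadm p.2)) hx' hγ hβ hδ).trans
    (measure_mono fun ω hω A a0 U hA ha0 hU => ?_)
  have gap_le := hω (fun t => WithLp.toLp 2 (U *ᵥ A.col t)) (WithLp.toLp 2 (U *ᵥ a0))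
    (by simpa only [norm_toLp_mulVec_of_transpose_mul_self hU] using
      (sum_norm_sq_col_le_l21_sq A).trans hA)
    (by simpa only [norm_toLp_mulVec_of_transpose_mul_self hU, EuclideanSpace.real_norm_sq_eq])
  simp only [inner_toLp_mulVec_add] at gap_le
  have tail_le := mul_le_mul_of_nonneg_left (sqrt_log_one_div_le_three_mul_sqrt_log_two_div hδ
    (by positivity : (0 : ℝ) ≤ 2 * m * T)) B.coe_nonneg
  refine gap_le.trans ?_
  linarith
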